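/- Let α, β be reals with 2 < α ≤ 5/2 and 4α − β = 6, let G be a minimal counterexample for the class 𝔉 of forests and parameters α, β, and let U be the set of vertices of G of degree exactly 4. Then the induced subgraph G[U] has maximum degree at most 1, i.e., G[U] is a disjoint union of isolated vertices and single edges. -/

import Mathlib

/-!
Since `α ≤ 5/2` and `4α - β = 6`, positive quality gives `2|E| + 8 < 5|V|`, and minimality yields a
reduction (`exists_forestSep`): delete a set `X` of vertices meeting at least
`5|X|/2 + t` edges and add `t ≤ 1` edge elsewhere; if at least four vertices remain, the resulting
graph has a forest cut. The art is to choose the reduction so that such a cut extends to a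
forest cut of `G`. For instance it does when `X = {v}` and `N(v)` has become a clique, as a clique
lies on one side of any cut (`Critical.false_of_clique`). Forests enter through degeneracy: `M`
induces a forest iff every nonempty `S ⊆ M` has a vertex with at most one neighbour in `S`.

All degrees are at least four: the neighbourhood of a vertex of degree at most three is a cut, so it
is not a forest and hence is a triangle, which is the clique case. Counting edges gives `|V| ≥ 9`,
so that the small cuts used below do leave vertices on the far side.

Let `v` have degree four. `N(v)` is a cut, so it contains a triangle or is an induced 4-cycle. In the
latter case, delete `v` and join two opposite vertices `a`, `c` of the cycle: a cut which separates
`N(v)` contains `a` and `c`, and `v` can be added to it, replacing the edge `ac` by the path `avc`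
(`Critical.not_fourCycle`). So `N(v) = {a, b, c, d}` with a triangle `abc`, and `d` has at most one
neighbour in the triangle, since otherwise one added edge makes `N(v)` a clique.

The main point (`Critical.false_of_triangle`) is that `a` does not have degree four. Otherwise
`N(a) = {v, b, c, x}`, and `{b, c, d, x}` separates `{v, a}` from the rest. The vertices `d` and `x`
each have at most one neighbour in `{b, c}`, so this cut is a forest unless `x ≠ d`, `x` is adjacent
to `d`, and `d` is adjacent to, say, `b`. Then delete `v` and `a` and add the edge `dc`. As `bcd` is now
a triangle, a forest cut `M` of the result has a side `L` avoiding `b`, `c`, `d`. If `x ∉ L`, put `v`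
and `a` on the other side `R`. If `x ∈ L`, then `d ∈ M`, so `b` or `c` lies in `R`; put `v` in `R` and
`a` in `M`, where it has at most one neighbour. Both cases give a forest cut of `G`.

By symmetry no vertex of the triangle has degree four, so `d` is the only possible neighbour of `v`
in `U`.
-/

open SimpleGraph

/-- `M` is a vertex cut of `G`: the complement of `M` can be partitioned into two nonempty
sets `L`, `R` with no edge of `G` joining a vertex of `L` to a vertex of `R`. -/
def IsVertexCut {V : Type*} (G : SimpleGraph V) (M : Set V) : Prop :=
  ∃ L R : Set V, L.Nonempty ∧ R.Nonempty ∧ Disjoint L R ∧ L ∪ R = Mᶜ ∧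
    ∀ x ∈ L, ∀ y ∈ R, ¬ G.Adj x y

/-- `(M, L, R)` is a separation of `G`. -/
def IsSeparation {V : Type*} (G : SimpleGraph V) (M L R : Set V) : Prop :=
  L.Nonempty ∧ R.Nonempty ∧ M ∪ L ∪ R = Set.univ ∧
  Disjoint M L ∧ Disjoint M R ∧ Disjoint L R ∧
  ∀ x ∈ L, ∀ y ∈ R, ¬ G.Adj x y

/-- The quality function `q_{α,β}(G) = α|V(G)| − |E(G)| − β`. -/
noncomputable def quality {V : Type*} (α β : ℝ) (G : SimpleGraph V) : ℝ :=
  α * Nat.card V - Nat.card G.edgeSet - β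

/-- degree of a vertex as the cardinality of its neighbor set. -/
noncomputable def vdeg {V : Type*} (G : SimpleGraph V) (v : V) : ℕ :=
  (G.neighborSet v).ncard

/-- The class of forests. -/
def ForestClass : ∀ (W : Type), SimpleGraph W → Prop := fun _ H => H.IsAcyclic

/-- The class of bipartite graphs. -/
def BipartiteClass : ∀ (W : Type), SimpleGraph W → Prop := fun _ H => H.Colorable 2

/-- `G` has a `Ψ`-cut: a vertex cut whose induced subgraph lies in `Ψ`. -/
def HasPsiCut (Ψ : ∀ (W : Type), SimpleGraph W → Prop) {V : Type} (G : SimpleGraph V) : Prop :=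
  ∃ M : Set V, IsVertexCut G M ∧ Ψ ↥M (G.induce M)

/-- `G` has a forest cut. -/
def HasForestCut {V : Type*} (G : SimpleGraph V) : Prop :=
  ∃ M : Set V, IsVertexCut G M ∧ (G.induce M).IsAcyclic

/-- `G` has a bipartite cut. -/
def HasBipartiteCut {V : Type*} (G : SimpleGraph V) : Prop :=
  ∃ M : Set V, IsVertexCut G M ∧ (G.induce M).Colorable 2

/-- `G` has an independent cut. -/
def HasIndependentCut {V : Type*} (G : SimpleGraph V) : Prop :=
  ∃ M : Set V, IsVertexCut G M ∧ ∀ x ∈ M, ∀ y ∈ M, ¬ G.Adj x y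

/-- `G` is a minimal counterexample for the class `Ψ` and parameters `α`, `β`. -/
def MinCounterexample (Ψ : ∀ (W : Type), SimpleGraph W → Prop) (α β : ℝ)
    {V : Type} (G : SimpleGraph V) : Prop :=
  4 ≤ Nat.card V ∧ 0 < quality α β G ∧ ¬ HasPsiCut Ψ G ∧
  ∀ (W : Type) (H : SimpleGraph W),
    4 ≤ Nat.card W → Nat.card W < Nat.card V → 0 < quality α β H → HasPsiCut Ψ H

/-- `T0`: a triangle together with an isolated vertex. -/
def graphT0 : SimpleGraph (Fin 4) := SimpleGraph.fromEdgeSet {s(0,1), s(0,2), s(1,2)}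

/-- `T1`: a triangle with an extra vertex joined to exactly one triangle vertex. -/
def graphT1 : SimpleGraph (Fin 4) := SimpleGraph.fromEdgeSet {s(0,1), s(0,2), s(1,2), s(2,3)}

/-- The diamond graph `K4` minus one edge. -/
def diamondGraph : SimpleGraph (Fin 4) := (⊤ : SimpleGraph (Fin 4)).deleteEdges {s(0,1)}

/-- Number of edges of `G` with one endpoint in `X` and the other outside `X`. -/
noncomputable def crossEdges {V : Type*} (G : SimpleGraph V) (X : Set V) : ℕ :=
  {e : Sym2 V | e ∈ G.edgeSet ∧ ∃ x ∈ X, ∃ y ∉ X, e = s(x,y)}.ncard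

/-! ### Forests and separations -/

section Forests

/-- The set `M` induces a forest of `G`, phrased through degeneracy: every nonempty `S ⊆ M` has a
vertex with at most one neighbour inside `S`. For finite `M` this is acyclicity of `G[M]`. -/
def InducesForest {V : Type*} (G : SimpleGraph V) (M : Set V) : Prop :=
  ∀ S ⊆ M, S.Nonempty → ∃ s ∈ S, ∀ p ∈ S, ∀ q ∈ S, G.Adj s p → G.Adj s q → p = q

variable {V : Type*} {G H : SimpleGraph V} {M : Set V}

lemma InducesForest.of_isAcyclic [Finite V] (h : (G.induce M).IsAcyclic) :
    InducesForest G M := by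
  classical
  intro S hS hne
  obtain ⟨s₀, hs₀⟩ := hne
  have hT : (G.induce S).IsAcyclic :=
    h.comap (G' := G.induce M) (SimpleGraph.induceHomOfLE G hS).toHom
      (SimpleGraph.induceHomOfLE G hS).injective
  let C := (G.induce S).connectedComponentMk ⟨s₀, hs₀⟩
  have hC := hT.isTree_connectedComponent C
  rcases subsingleton_or_nontrivial C with hsub | hnt
  · refine ⟨s₀, hs₀, fun p hp q hq hsp _ ↦ ?_⟩
    have hpC : (⟨p, hp⟩ : S) ∈ C :=
      ConnectedComponent.sound (SimpleGraph.Adj.reachable (G := G.induce S) (by simpa using hsp.symm))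
    have h0C : (⟨s₀, hs₀⟩ : S) ∈ C := rfl
    have := hsub.elim ⟨_, hpC⟩ ⟨_, h0C⟩
    simp only [Subtype.mk.injEq] at this
    subst this
    exact absurd hsp (G.loopless.irrefl _)
  · have : Fintype C := Fintype.ofFinite _
    obtain ⟨w, hw⟩ := hC.exists_vert_degree_one_of_nontrivial
    rw [degree_eq_one_iff_existsUnique_adj] at hw
    obtain ⟨t, -, ht⟩ := hw
    have key : ∀ p (hp : p ∈ S), G.Adj w.1.1 p → p = t.1.1 := by
      intro p hp hadj
      have hadj' : (G.induce S).Adj w.1 ⟨p, hp⟩ := by simpa using hadj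
      have hpC : (⟨p, hp⟩ : S) ∈ C := by
        have := ConnectedComponent.sound hadj'.symm.reachable
        exact this.trans w.2
      have := ht ⟨_, hpC⟩ hadj'
      rw [← this]
    exact ⟨w.1.1, w.1.2, fun p hp q hq h1 h2 ↦ (key p hp h1).trans (key q hq h2).symm⟩

lemma InducesForest.isAcyclic (h : InducesForest G M) : (G.induce M).IsAcyclic := by
  intro u c hc
  obtain ⟨s, hs, huniq⟩ := h (Subtype.val '' {x | x ∈ c.support}) (by rintro _ ⟨x, -, rfl⟩; exact x.2)
    ⟨u, u, c.start_mem_support, rfl⟩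
  obtain ⟨x, hx, rfl⟩ := hs
  -- every vertex of a cycle has two distinct neighbours on the cycle
  obtain ⟨p, q, hpq, hN⟩ := Set.ncard_eq_two.1 (hc.ncard_neighborSet_toSubgraph_eq_two hx)
  have hp : c.toSubgraph.Adj x p := by
    have : p ∈ c.toSubgraph.neighborSet x := by simp [hN]
    exact this
  have hq : c.toSubgraph.Adj x q := by
    have : q ∈ c.toSubgraph.neighborSet x := by simp [hN]
    exact this
  exact hpq (Subtype.ext (huniq p ⟨p, c.mem_verts_toSubgraph.1 hp.snd_mem, rfl⟩
    q ⟨q, c.mem_verts_toSubgraph.1 hq.snd_mem, rfl⟩ hp.adj_sub hq.adj_sub))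

lemma InducesForest.empty : InducesForest G ∅ := by
  intro S hS hne
  exact absurd (Set.subset_eq_empty hS rfl) hne.ne_empty

lemma InducesForest.anti (hle : G ≤ H) (h : InducesForest H M) : InducesForest G M := by
  intro S hS hne
  obtain ⟨s, hs, h1⟩ := h S hS hne
  exact ⟨s, hs, fun p hp q hq a b ↦ h1 p hp q hq (hle a) (hle b)⟩

lemma InducesForest.insert (h : InducesForest G M) {v : V}
    (hv : ∀ p ∈ M, ∀ q ∈ M, G.Adj v p → G.Adj v q → p = q) : InducesForest G (insert v M) := by
  intro S hS hne
  by_cases hvS : v ∈ S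
  · refine ⟨v, hvS, fun p hp q hq a b ↦ hv p ?_ q ?_ a b⟩
    · exact (hS hp).resolve_left a.ne'
    · exact (hS hq).resolve_left b.ne'
  · exact h S (fun x hx ↦ (hS hx).resolve_left (by rintro rfl; exact hvS hx)) hne

lemma InducesForest.no_triangle (h : InducesForest G M) {a b c : V} (ha : a ∈ M) (hb : b ∈ M)
    (hc : c ∈ M) (hab : G.Adj a b) (hac : G.Adj a c) (hbc : G.Adj b c) : False := by
  obtain ⟨s, hs, h1⟩ := h {a, b, c} (by rintro x (rfl | rfl | rfl) <;> assumption) ⟨a, by simp⟩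
  rcases hs with rfl | rfl | rfl
  · exact hbc.ne (h1 b (by simp) c (by simp) hab hac)
  · exact hac.ne (h1 a (by simp) c (by simp) hab.symm hbc)
  · exact hab.ne (h1 a (by simp) b (by simp) hac.symm hbc.symm)

/-- `L` and `R` are the two nonempty sides of a separation of `G[Y]` along `M`, and `M` induces a
forest of `G`. -/
structure ForestSep (G : SimpleGraph V) (Y M L R : Set V) : Prop where
  left : L.Nonempty
  right : R.Nonempty
  mem : ∀ x, x ∈ Y ↔ x ∈ M ∨ x ∈ L ∨ x ∈ R
  ml : ∀ x ∈ M, x ∉ L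
  mr : ∀ x ∈ M, x ∉ R
  lr : ∀ x ∈ L, x ∉ R
  noadj : ∀ x ∈ L, ∀ y ∈ R, ¬ G.Adj x y
  forest : InducesForest G M

variable {Y L R : Set V}

lemma ForestSep.symm (h : ForestSep G Y M L R) : ForestSep G Y M R L where
  left := h.right
  right := h.left
  mem x := by rw [h.mem, or_comm (a := x ∈ L)]
  ml := h.mr
  mr := h.ml
  lr x hx hx' := h.lr x hx' hx
  noadj x hx y hy hxy := h.noadj y hy x hx hxy.symm
  forest := h.forest

end Forests

/-! ### Consequences of minimality -/

section Critical

/-- The consequences of being a minimal counterexample with `α ≤ 5/2` and `4α - β = 6` that the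
argument uses, with `α` replaced by its upper bound `5/2`: a bound on the number of edges, the
absence of forest cuts, and the reductions that add no edge (`red₀`) or the edge `pq` (`red₁`). -/
structure Critical {V : Type} [Fintype V] (G : SimpleGraph V) : Prop where
  card : 2 * Nat.card G.edgeSet + 8 < 5 * Nat.card V
  noSep : ∀ M L R, ¬ ForestSep G Set.univ M L R
  red₀ : ∀ (X : Set V) (F : Finset (Sym2 V)), X.Nonempty → 4 ≤ Xᶜ.ncard →
    (∀ e ∈ F, e ∈ G.edgeSet ∧ ∃ x ∈ X, x ∈ e) → 5 * X.ncard ≤ 2 * F.card →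
    ∃ M L R, ForestSep G Xᶜ M L R
  red₁ : ∀ (p q : V) (X : Set V) (F : Finset (Sym2 V)), X.Nonempty → 4 ≤ Xᶜ.ncard →
    (∀ e ∈ F, e ∈ G.edgeSet ∧ ∃ x ∈ X, x ∈ e) → 5 * X.ncard + 2 ≤ 2 * F.card →
    ∃ M L R, ForestSep (G ⊔ edge p q) Xᶜ M L R

variable {V : Type} [Fintype V] {G : SimpleGraph V}

/-- Deleting `X`, which destroys at least the edges in `F`, and adding at most the edges in `A`
gives a smaller graph of positive quality, which has a forest cut by minimality. -/
lemma exists_forestSep {α β : ℝ} (hα2 : α ≤ 5 / 2)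
    (hG : MinCounterexample ForestClass α β G) (H : SimpleGraph V) (A F : Finset (Sym2 V))
    (X : Set V) (hX : X.Nonempty) (hc : 4 ≤ Xᶜ.ncard)
    (hA : ∀ e ∈ H.edgeSet, e ∈ G.edgeSet ∨ e ∈ A)
    (hF : ∀ e ∈ F, e ∈ G.edgeSet ∧ ∃ x ∈ X, x ∈ e)
    (hle : 5 * X.ncard + 2 * A.card ≤ 2 * F.card) : ∃ M L R, ForestSep H Xᶜ M L R := by
  classical
  obtain ⟨-, hq, -, hmin⟩ := hG
  have hcard : X.ncard + Xᶜ.ncard = Nat.card V := Set.ncard_add_ncard_compl X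
  have hXpos : 0 < X.ncard := (Set.ncard_pos).2 hX
  have hW : Nat.card ↥Xᶜ = Xᶜ.ncard := Nat.card_coe_set_eq _
  have hedge : Nat.card (H.induce Xᶜ).edgeSet + F.card ≤ Nat.card G.edgeSet + A.card := by
    have hinj : Function.Injective (Sym2.map (Subtype.val : ↥Xᶜ → V)) :=
      Sym2.map.injective Subtype.val_injective
    have h1 : Nat.card (H.induce Xᶜ).edgeSet
        = (Sym2.map (Subtype.val : ↥Xᶜ → V) '' (H.induce Xᶜ).edgeSet).ncard := by
      rw [Set.ncard_image_of_injective _ hinj, Nat.card_coe_set_eq]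
    have h2 : Sym2.map (Subtype.val : ↥Xᶜ → V) '' (H.induce Xᶜ).edgeSet
        ⊆ (G.edgeSet \ (F : Set (Sym2 V))) ∪ (A : Set (Sym2 V)) := by
      rintro _ ⟨e, he, rfl⟩
      have hnF : Sym2.map (Subtype.val : ↥Xᶜ → V) e ∉ F := by
        intro hmem
        obtain ⟨-, x, hxX, hxe⟩ := hF _ hmem
        obtain ⟨y, -, rfl⟩ := Sym2.mem_map.1 hxe
        exact y.2 hxX
      have hH : Sym2.map (Subtype.val : ↥Xᶜ → V) e ∈ H.edgeSet := by
        induction e with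
        | h x y => simpa using he
      rcases hA _ hH with h | h
      · exact Or.inl ⟨h, hnF⟩
      · exact Or.inr h
    have h3 := Set.ncard_le_ncard h2
    have h4 := Set.ncard_union_le (G.edgeSet \ (F : Set (Sym2 V))) (A : Set (Sym2 V))
    have h5 := Set.ncard_sdiff_add_ncard_of_subset (s := (F : Set (Sym2 V))) (t := G.edgeSet)
      (fun e he ↦ (hF e he).1)
    rw [Set.ncard_coe_finset] at h4 h5
    rw [h1, Nat.card_coe_set_eq]
    omega
  have hqH : 0 < quality α β (H.induce Xᶜ) := by
    unfold quality at hq ⊢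
    rw [hW]
    have e1 : (X.ncard : ℝ) + Xᶜ.ncard = Nat.card V := by exact_mod_cast hcard
    have e2 : (Nat.card (H.induce Xᶜ).edgeSet : ℝ) + F.card ≤ Nat.card G.edgeSet + A.card := by
      exact_mod_cast hedge
    have e3 : (5 : ℝ) * X.ncard + 2 * A.card ≤ 2 * F.card := by exact_mod_cast hle
    have e4 : α * X.ncard ≤ 5 / 2 * X.ncard := by gcongr
    rw [← e1] at hq
    linarith
  obtain ⟨M, ⟨L, R, hL, hR, hLR, hU, hadj⟩, hac⟩ := hmin _ (H.induce Xᶜ) (by omega) (by omega) hqH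
  refine ⟨Subtype.val '' M, Subtype.val '' L, Subtype.val '' R, hL.image _, hR.image _, ?_, ?_, ?_,
    ?_, ?_, ?_⟩
  · intro x
    constructor
    · intro hx
      by_cases hM : (⟨x, hx⟩ : ↥Xᶜ) ∈ M
      · exact Or.inl ⟨_, hM, rfl⟩
      · have : (⟨x, hx⟩ : ↥Xᶜ) ∈ L ∪ R := by rw [hU]; exact hM
        exact Or.inr (this.imp (fun h ↦ ⟨_, h, rfl⟩) (fun h ↦ ⟨_, h, rfl⟩))
    · rintro (⟨y, -, rfl⟩ | ⟨y, -, rfl⟩ | ⟨y, -, rfl⟩) <;> exact y.2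
  · rintro _ ⟨x, hx, rfl⟩ ⟨y, hy, hxy⟩
    obtain rfl := Subtype.ext hxy
    have : y ∈ L ∪ R := Or.inl hy
    rw [hU] at this
    exact this hx
  · rintro _ ⟨x, hx, rfl⟩ ⟨y, hy, hxy⟩
    obtain rfl := Subtype.ext hxy
    have : y ∈ L ∪ R := Or.inr hy
    rw [hU] at this
    exact this hx
  · rintro _ ⟨x, hx, rfl⟩ ⟨y, hy, hxy⟩
    obtain rfl := Subtype.ext hxy
    exact Set.disjoint_left.1 hLR hx hy
  · rintro _ ⟨x, hx, rfl⟩ _ ⟨y, hy, rfl⟩ hxy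
    exact hadj x hx y hy (by simpa using hxy)
  · have hf := InducesForest.of_isAcyclic hac
    intro S hS hne
    obtain ⟨s, hs, h1⟩ := hf (Subtype.val ⁻¹' S) (by
      intro x hx
      obtain ⟨y, hy, hxy⟩ := hS hx
      obtain rfl := Subtype.ext hxy
      exact hy) (by
      obtain ⟨x, hx⟩ := hne
      obtain ⟨y, hy, rfl⟩ := hS hx
      exact ⟨y, hx⟩)
    refine ⟨s.1, hs, fun p hp q hq hsp hsq ↦ ?_⟩
    obtain ⟨p, -, rfl⟩ := hS hp
    obtain ⟨q, -, rfl⟩ := hS hq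
    exact congrArg Subtype.val (h1 p hp q hq (by simpa using hsp) (by simpa using hsq))

lemma critical_of_minCounterexample {α β : ℝ} (hα2 : α ≤ 5 / 2) (hβ : 4 * α - β = 6)
    (hG : MinCounterexample ForestClass α β G) : Critical G where
  card := by
    obtain ⟨h4, hq, -, -⟩ := hG
    unfold quality at hq
    have h4' : (4 : ℝ) ≤ Nat.card V := by exact_mod_cast h4
    have : (2 : ℝ) * Nat.card G.edgeSet + 8 < 5 * Nat.card V := by nlinarith
    exact_mod_cast this
  noSep M L R h := by
    refine hG.2.2.1 ⟨M, ⟨L, R, h.left, h.right, Set.disjoint_left.2 h.lr, ?_, h.noadj⟩,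
      h.forest.isAcyclic⟩
    ext x
    have h1 := (h.mem x).1 trivial
    have h2 := h.ml x
    have h3 := h.mr x
    simp only [Set.mem_union, Set.mem_compl_iff]
    tauto
  red₀ X F hX hc hF hle :=
    exists_forestSep hα2 hG G ∅ F X hX hc (fun e he ↦ Or.inl he) hF (by simpa using hle)
  red₁ p q X F hX hc hF hle := by
    classical
    refine exists_forestSep hα2 hG _ {s(p, q)} F X hX hc (fun e he ↦ ?_) hF (by simpa using hle)
    induction e with
    | h x y =>
      rw [mem_edgeSet, sup_adj, edge_adj] at he
      rcases he with he | ⟨he, -⟩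
      · exact Or.inl he
      · right
        simpa using he

/-- If `N(A) ⊆ A ∪ M` and some vertex lies outside `A ∪ M`, then `M` is a cut, so it induces a
cycle. -/
lemma Critical.not_inducesForest (hG : Critical G) {A M : Set V} (hA : A.Nonempty)
    (hAM : ∀ x ∈ M, x ∉ A) (hN : ∀ x ∈ A, ∀ y, G.Adj x y → y ∈ A ∨ y ∈ M)
    (hw : ∃ w, w ∉ A ∧ w ∉ M) : ¬ InducesForest G M := by
  intro hM
  refine hG.noSep M A (A ∪ M)ᶜ ⟨hA, ?_, ?_, hAM, ?_, ?_, ?_, hM⟩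
  · obtain ⟨w, h1, h2⟩ := hw
    exact ⟨w, by simp [h1, h2]⟩
  · intro x
    simp only [Set.mem_univ, Set.mem_compl_iff, Set.mem_union]
    tauto
  · intro x hx h; exact h (Or.inr hx)
  · intro x hx h; exact h (Or.inl hx)
  · intro x hx y hy hxy; exact hy (hN x hx y hxy)

/-- A forest separation of `H - v`, where `H ⊇ G`, yields one of `G` if `v` has no neighbour on one
of the sides. Hence `v` has neighbours on both sides. -/
lemma Critical.exists_adj_left (hG : Critical G) {H : SimpleGraph V} (hGH : G ≤ H) {v : V}
    {M L R : Set V} (h : ForestSep H {v}ᶜ M L R) : ∃ x ∈ L, G.Adj v x := by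
  by_contra! hno
  have hv := h.mem v
  simp only [Set.mem_compl_iff, Set.mem_singleton_iff, not_true_eq_false, false_iff, not_or] at hv
  refine hG.noSep M L (insert v R) ⟨h.left, ⟨v, by simp⟩, ?_, h.ml, ?_, ?_, ?_, h.forest.anti hGH⟩
  · intro x
    have := h.mem x
    simp only [Set.mem_univ, Set.mem_insert_iff, Set.mem_compl_iff, Set.mem_singleton_iff] at this ⊢
    tauto
  · rintro x hx (rfl | hx')
    · exact hv.1 hx
    · exact h.mr x hx hx'
  · rintro x hx (rfl | hx')
    · exact hv.2.1 hx
    · exact h.lr x hx hx'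
  · rintro x hx y (rfl | hy) hxy
    · exact hno x hx hxy.symm
    · exact h.noadj x hx y hy (hGH hxy)

/-- There is no forest separation of `H - v`, where `H ⊇ G`, if `N(v)` is a clique of `H`. -/
lemma Critical.false_of_clique (hG : Critical G) {H : SimpleGraph V} (hGH : G ≤ H) {v : V}
    (hcl : ∀ x y, G.Adj v x → G.Adj v y → x ≠ y → H.Adj x y)
    {M L R : Set V} (h : ForestSep H {v}ᶜ M L R) : False := by
  obtain ⟨x, hx, hvx⟩ := hG.exists_adj_left hGH h
  obtain ⟨y, hy, hvy⟩ := hG.exists_adj_left hGH h.symm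
  exact h.noadj x hx y hy (hcl x y hvx hvy (by rintro rfl; exact h.lr x hx hy))

/-- The edges at `v`, as a finset. -/
lemma exists_finset_edges (G : SimpleGraph V) (v : V) : ∃ F : Finset (Sym2 V),
    (∀ e ∈ F, e ∈ G.edgeSet ∧ ∃ x ∈ ({v} : Set V), x ∈ e) ∧ F.card = vdeg G v := by
  classical
  refine ⟨(G.neighborSet v).toFinset.image (fun x ↦ s(v, x)), ?_, ?_⟩
  · intro e he
    obtain ⟨x, hx, rfl⟩ := Finset.mem_image.1 he
    exact ⟨by simpa using hx, v, rfl, by simp⟩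
  · rw [Finset.card_image_of_injective _ (fun x y h ↦ Sym2.congr_right.1 h), vdeg,
      Set.ncard_eq_toFinset_card']

lemma ncard_compl_singleton (v : V) : ({v}ᶜ : Set V).ncard = Nat.card V - 1 := by
  have := Set.ncard_add_ncard_compl ({v} : Set V)
  rw [Set.ncard_singleton] at this
  omega

lemma vdeg_lt_card (v : V) : vdeg G v < Nat.card V := by
  have h1 : G.neighborSet v ⊆ {v}ᶜ := by
    rintro x hx rfl; exact G.loopless.irrefl _ hx
  have := Set.ncard_le_ncard h1
  rw [ncard_compl_singleton] at this
  have : 0 < Nat.card V := Nat.card_pos_iff.2 ⟨⟨v⟩, inferInstance⟩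
  unfold vdeg
  omega

lemma Critical.not_inducesForest_neighborSet (hG : Critical G) {u : V}
    (hu : vdeg G u + 1 < Nat.card V) : ¬ InducesForest G (G.neighborSet u) := by
  refine hG.not_inducesForest (A := {u}) ⟨u, rfl⟩ ?_ ?_ ?_
  · rintro x hx rfl; exact G.loopless.irrefl _ hx
  · rintro x rfl y hy; exact Or.inr hy
  · by_contra! hall
    have : (Set.univ : Set V) ⊆ insert u (G.neighborSet u) := by
      intro w _
      by_cases hw : w = u
      · exact Or.inl hw
      · exact Or.inr (hall w hw)
    have h1 := Set.ncard_le_ncard this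
    have h2 := Set.ncard_insert_le u (G.neighborSet u)
    rw [Set.ncard_univ] at h1
    unfold vdeg at hu
    omega

/-! ### Minimum degree and order -/

/-- A vertex of degree at most three has a neighbourhood which is a cut, hence a triangle; deleting
such a vertex contradicts minimality. -/
lemma Critical.four_le_vdeg (hG : Critical G) (hV : 5 ≤ Nat.card V) (u : V) : 4 ≤ vdeg G u := by
  classical
  by_contra! hlt
  have hcut := hG.not_inducesForest_neighborSet (u := u) (by omega)
  unfold InducesForest at hcut
  push Not at hcut
  obtain ⟨S, hS, ⟨s, hs⟩, hS2⟩ := hcut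
  obtain ⟨p, hp, q, hq, hsp, hsq, hpq⟩ := hS2 s hs
  -- the neighbourhood consists of exactly the three vertices `s`, `p`, `q`
  have h3 : ({s, p, q} : Set V).ncard = 3 := Set.ncard_eq_three.2
    ⟨s, p, q, hsp.ne, hsq.ne, hpq, rfl⟩
  have hsub : ({s, p, q} : Set V) ⊆ G.neighborSet u := by
    rintro x (rfl | rfl | rfl)
    exacts [hS hs, hS hp, hS hq]
  have hle := Set.ncard_le_ncard hsub
  have heq : ({s, p, q} : Set V) = G.neighborSet u :=
    Set.eq_of_subset_of_ncard_le hsub (by unfold vdeg at hlt; omega)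
  have hmem : ∀ x, G.Adj u x → x = s ∨ x = p ∨ x = q := by
    intro x hx
    have : x ∈ ({s, p, q} : Set V) := by rw [heq]; exact hx
    simpa using this
  have hadj : G.Adj p q := by
    obtain ⟨y, hy, z, hz, hpy, hpz, hyz⟩ := hS2 p hp
    have hy' := hmem y (hS hy)
    have hz' := hmem z (hS hz)
    have := hpy.ne
    have := hpz.ne
    grind
  obtain ⟨F, hF, hFc⟩ := exists_finset_edges G u
  have hdeg : vdeg G u = 3 := by unfold vdeg at hlt ⊢; omega
  obtain ⟨M, L, R, h⟩ := hG.red₀ {u} F ⟨u, rfl⟩ (by rw [ncard_compl_singleton]; omega) hF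
    (by rw [Set.ncard_singleton]; omega)
  refine hG.false_of_clique le_rfl (fun x y hx hy hxy ↦ ?_) h
  have hx' := hmem x hx
  have hy' := hmem y hy
  have := hsp.symm
  have := hsq.symm
  have := hadj.symm
  grind

lemma Critical.nine_le_card (hG : Critical G) (hV : 5 ≤ Nat.card V) : 9 ≤ Nat.card V := by
  classical
  have h1 := G.sum_degrees_eq_twice_card_edges
  have h2 : ∑ _v : V, 4 ≤ ∑ v, G.degree v := by
    refine Finset.sum_le_sum fun v _ ↦ ?_
    have := hG.four_le_vdeg hV v
    rwa [vdeg, Set.ncard_eq_toFinset_card', Set.toFinset_card, card_neighborSet_eq_degree] at this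
  have h3 : Nat.card G.edgeSet = G.edgeFinset.card := by
    rw [Nat.card_eq_fintype_card, ← edgeFinset_card]
  have h4 := hG.card
  simp only [Finset.sum_const, Finset.card_univ, smul_eq_mul, ← Nat.card_eq_fintype_card] at h2
  omega

/-! ### Neighbourhoods of vertices of degree four -/

/-- The neighbours of `v` are exactly the four distinct vertices `a`, `b`, `c`, `d`. -/
structure Nbrs4 (G : SimpleGraph V) (v a b c d : V) : Prop where
  ab : a ≠ b
  ac : a ≠ c
  ad : a ≠ d
  bc : b ≠ c
  bd : b ≠ d
  cd : c ≠ d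
  adj : ∀ x, G.Adj v x ↔ x = a ∨ x = b ∨ x = c ∨ x = d

variable {v a b c d : V}

lemma Nbrs4.vdeg_eq {V : Type} {G : SimpleGraph V} {v a b c d : V} (h : Nbrs4 G v a b c d) : vdeg G v = 4 := by
  have : G.neighborSet v = {a, b, c, d} := by
    ext x; simpa using h.adj x
  rw [vdeg, this]
  classical
  have h1 := h.ab
  have h2 := h.ac
  have h3 := h.ad
  have h4 := h.bc
  have h5 := h.bd
  have h6 := h.cd
  rw [show ({a, b, c, d} : Set V) = (({a, b, c, d} : Finset V) : Set V) by simp,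
    Set.ncard_coe_finset]
  rw [Finset.card_insert_of_notMem, Finset.card_insert_of_notMem, Finset.card_insert_of_notMem,
    Finset.card_singleton] <;> simp [*]

lemma exists_nbrs4 (hv : vdeg G v = 4) (ha : G.Adj v a) (hb : G.Adj v b) (hc : G.Adj v c)
    (hab : a ≠ b) (hac : a ≠ c) (hbc : b ≠ c) : ∃ d, Nbrs4 G v a b c d := by
  have h3 : ({a, b, c} : Set V).ncard = 3 := Set.ncard_eq_three.2 ⟨a, b, c, hab, hac, hbc, rfl⟩
  have hsub : ({a, b, c} : Set V) ⊆ G.neighborSet v := by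
    rintro x (rfl | rfl | rfl) <;> assumption
  have h1 : (G.neighborSet v \ {a, b, c}).ncard = 1 := by
    have := Set.ncard_sdiff_add_ncard_of_subset hsub
    unfold vdeg at hv
    omega
  obtain ⟨d, hd⟩ := Set.ncard_eq_one.1 h1
  have key : ∀ x, (G.Adj v x ∧ ¬ (x = a ∨ x = b ∨ x = c)) ↔ x = d := by
    intro x
    have := Set.ext_iff.1 hd x
    simpa using this
  have hd' := (key d).2 rfl
  refine ⟨d, hab, hac, by grind, hbc, by grind, by grind, fun x ↦ ?_⟩
  have := key x
  constructor
  · intro hx; tauto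
  · rintro (rfl | rfl | rfl | rfl)
    exacts [ha, hb, hc, hd'.1]

/-- Delete a vertex of degree four and add one edge: the result has a forest separation. -/
lemma Critical.exists_forestSep_edge (hG : Critical G) (h : Nbrs4 G v a b c d) (p q : V) :
    ∃ M L R, ForestSep (G ⊔ edge p q) {v}ᶜ M L R := by
  obtain ⟨F, hF, hFc⟩ := exists_finset_edges G v
  have h4 := h.vdeg_eq
  have h5 := vdeg_lt_card (G := G) v
  exact hG.red₁ p q {v} F ⟨v, rfl⟩ (by rw [ncard_compl_singleton]; omega) hF
    (by rw [Set.ncard_singleton]; omega)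

lemma Critical.nine_le_card_of_vdeg (hG : Critical G) (h : vdeg G v = 4) : 9 ≤ Nat.card V :=
  hG.nine_le_card (by have := vdeg_lt_card (G := G) v; omega)

/-- Any six vertices miss a vertex. -/
lemma exists_ne_six (hV : 9 ≤ Nat.card V) (x₁ x₂ x₃ x₄ x₅ x₆ : V) : ∃ w, w ≠ x₁ ∧ w ≠ x₂ ∧
    w ≠ x₃ ∧ w ≠ x₄ ∧ w ≠ x₅ ∧ w ≠ x₆ := by
  classical
  have h6 := Finset.card_le_six (a := x₁) (b := x₂) (c := x₃) (d := x₄) (e := x₅) (f := x₆)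
  obtain ⟨w, -, hw⟩ := Finset.exists_mem_notMem_of_card_lt_card
    (s := {x₁, x₂, x₃, x₄, x₅, x₆}) (t := (Finset.univ : Finset V))
    (by rw [Finset.card_univ, ← Nat.card_eq_fintype_card]; omega)
  exact ⟨w, by simpa using hw⟩

/-- The neighbourhood of a vertex of degree four is not an induced 4-cycle `abcd`: after joining
`a` to `c` in `G - v`, a forest cut that separates `N(v)` must contain `a` and `c`, and it stays a
forest of `G` when `v` replaces the added edge `ac` by the path `avc`. -/
lemma Critical.not_fourCycle (hG : Critical G) (h : Nbrs4 G v a b c d) (hab : G.Adj a b)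
    (hbc : G.Adj b c) (hcd : G.Adj c d) (hda : G.Adj d a) (hac : ¬ G.Adj a c) : False := by
  obtain ⟨M, L, R, hS⟩ := hG.exists_forestSep_edge h a c
  have hle : G ≤ G ⊔ edge a c := le_sup_left
  have hacH : (G ⊔ edge a c).Adj a c := by simp [edge_adj, h.ac]
  obtain ⟨x, hx, hvx⟩ := hG.exists_adj_left hle hS
  obtain ⟨y, hy, hvy⟩ := hG.exists_adj_left hle hS.symm
  have hxy := hS.noadj x hx y hy
  have hne : x ≠ y := by rintro rfl; exact hS.lr x hx hy
  have hxy' : (x = b ∧ y = d) ∨ (x = d ∧ y = b) := by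
    have h1 := (h.adj x).1 hvx
    have h2 := (h.adj y).1 hvy
    have := hle hab
    have := hle hbc
    have := hle hcd
    have := hle hda
    have := (hle hab).symm
    have := (hle hbc).symm
    have := (hle hcd).symm
    have := (hle hda).symm
    have := hacH.symm
    grind
  have hvM := hS.mem v
  simp only [Set.mem_compl_iff, Set.mem_singleton_iff, not_true_eq_false, false_iff, not_or] at hvM
  have hva : G.Adj v a := (h.adj a).2 (by simp)
  have hvc : G.Adj v c := (h.adj c).2 (by simp)
  have hbM : b ∉ M := by
    have := hS.ml x
    have := hS.mr y
    have := hS.ml y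
    have := hS.mr x
    grind
  have hdM : d ∉ M := by
    have := hS.ml x
    have := hS.mr y
    have := hS.ml y
    have := hS.mr x
    grind
  refine hG.noSep (insert v M) L R ⟨hS.left, hS.right, ?_, ?_, ?_, hS.lr,
    fun x hx y hy hxy ↦ hS.noadj x hx y hy (hle hxy), ?_⟩
  · intro x
    have := hS.mem x
    simp only [Set.mem_univ, Set.mem_insert_iff, Set.mem_compl_iff, Set.mem_singleton_iff] at this ⊢
    tauto
  · rintro x (rfl | hx)
    exacts [hvM.2.1, hS.ml x hx]
  · rintro x (rfl | hx)
    exacts [hvM.2.2, hS.mr x hx]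
  · intro S hSM hSne
    by_cases hvS : v ∈ S
    swap
    · exact hS.forest.anti hle S (fun x hx ↦ (hSM hx).resolve_left (by rintro rfl; exact hvS hx))
        hSne
    by_cases hacS : a ∈ S ∧ c ∈ S
    swap
    · refine ⟨v, hvS, fun p hp q hq hvp hvq ↦ ?_⟩
      have h1 := (h.adj p).1 hvp
      have h2 := (h.adj q).1 hvq
      have h3 := (hSM hp).resolve_left hvp.ne'
      have h4 := (hSM hq).resolve_left hvq.ne'
      grind
    obtain ⟨haS, hcS⟩ := hacS
    obtain ⟨s, hs, huniq⟩ := hS.forest (S \ {v})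
      (fun x hx ↦ (hSM hx.1).resolve_left hx.2) ⟨a, haS, hva.ne'⟩
    have hsM : s ∈ M := (hSM hs.1).resolve_left hs.2
    -- a neighbour of `s` in `S` other than `v` is still a neighbour after the reduction
    have key : ∀ p ∈ S, G.Adj s p → p ≠ v → p ∈ S \ {v} ∧ (G ⊔ edge a c).Adj s p :=
      fun p hp hsp hpv ↦ ⟨⟨hp, hpv⟩, hle hsp⟩
    refine ⟨s, hs.1, fun p hp q hq hsp hsq ↦ ?_⟩
    by_cases hsa : s = a
    · subst hsa
      have hall : ∀ p ∈ S, G.Adj s p → p = v := by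
        intro p hp hsp
        by_contra hpv
        obtain ⟨h1, h2⟩ := key p hp hsp hpv
        exact hac (huniq p h1 c ⟨hcS, hvc.ne'⟩ h2 hacH ▸ hsp)
      exact (hall p hp hsp).trans (hall q hq hsq).symm
    by_cases hsc : s = c
    · subst hsc
      have hall : ∀ p ∈ S, G.Adj s p → p = v := by
        intro p hp hsp
        by_contra hpv
        obtain ⟨h1, h2⟩ := key p hp hsp hpv
        exact hac (huniq p h1 a ⟨haS, hva.ne'⟩ h2 hacH.symm ▸ hsp).symm
      exact (hall p hp hsp).trans (hall q hq hsq).symm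
    have hnv : ∀ p, G.Adj s p → p ≠ v := by
      rintro p hsp rfl
      have := (h.adj s).1 hsp.symm
      grind
    obtain ⟨h1, h2⟩ := key p hp hsp (hnv p hsp)
    obtain ⟨h3, h4⟩ := key q hq hsq (hnv q hsq)
    exact huniq p h1 q h3 h2 h4

lemma Nbrs4.swap_ab {V : Type} {G : SimpleGraph V} {v a b c d : V}
    (h : Nbrs4 G v a b c d) : Nbrs4 G v b a c d :=
  ⟨h.ab.symm, h.bc, h.bd, h.ac, h.ad, h.cd, fun x ↦ (h.adj x).trans (by tauto)⟩

lemma Nbrs4.swap_bc {V : Type} {G : SimpleGraph V} {v a b c d : V}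
    (h : Nbrs4 G v a b c d) : Nbrs4 G v a c b d :=
  ⟨h.ac, h.ab, h.ad, h.bc.symm, h.cd, h.bd, fun x ↦ (h.adj x).trans (by tauto)⟩

lemma Nbrs4.swap_cd {V : Type} {G : SimpleGraph V} {v a b c d : V}
    (h : Nbrs4 G v a b c d) : Nbrs4 G v a b d c :=
  ⟨h.ab, h.ad, h.ac, h.bd, h.bc, h.cd.symm, fun x ↦ (h.adj x).trans (by tauto)⟩

/-- The neighbourhood of a vertex of degree four contains a triangle, as its only other possible
non-forest is the 4-cycle. -/
lemma Critical.exists_triangle (hG : Critical G) (hv : vdeg G v = 4) :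
    ∃ a b c d, Nbrs4 G v a b c d ∧ G.Adj a b ∧ G.Adj a c ∧ G.Adj b c := by
  by_contra! hno
  have hcut := hG.not_inducesForest_neighborSet (u := v)
    (by have := hG.nine_le_card_of_vdeg hv; omega)
  have htri : ∀ a b c, G.Adj v a → G.Adj v b → G.Adj v c → G.Adj a b → G.Adj a c →
      ¬ G.Adj b c := by
    intro a b c ha hb hc hab hac hbc
    obtain ⟨d, hd⟩ := exists_nbrs4 hv ha hb hc hab.ne hac.ne hbc.ne
    exact hno a b c d hd hab hac hbc
  unfold InducesForest at hcut
  push Not at hcut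
  obtain ⟨S, hS, ⟨s, hs⟩, hS2⟩ := hcut
  obtain ⟨p, hp, q, hq, hsp, hsq, hpq⟩ := hS2 s hs
  have hpq' := htri s p q (hS hs) (hS hp) (hS hq) hsp hsq
  obtain ⟨r, hr⟩ := exists_nbrs4 hv (hS hs) (hS hp) (hS hq) hsp.ne hsq.ne hpq
  have hvr : G.Adj v r := (hr.adj r).2 (by simp)
  have hpr : G.Adj p r := by
    obtain ⟨y, hy, z, hz, hpy, hpz, hyz⟩ := hS2 p hp
    have h1 := (hr.adj y).1 (hS hy)
    have h2 := (hr.adj z).1 (hS hz)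
    have := hpy.ne
    have := hpz.ne
    grind
  have hqr : G.Adj q r := by
    obtain ⟨y, hy, z, hz, hqy, hqz, hyz⟩ := hS2 q hq
    have h1 := (hr.adj y).1 (hS hy)
    have h2 := (hr.adj z).1 (hS hz)
    have := hqy.ne
    have := hqz.ne
    have := G.adj_comm p q
    grind
  exact hG.not_fourCycle hr.swap_cd hsp hpr hqr.symm hsq.symm
    (fun hsr ↦ htri s p r (hS hs) (hS hp) hvr hsp hsr hpr)

/-- If the neighbourhood of a vertex of degree four consists of a triangle and a vertex `d`, then
`d` has at most one neighbour in the triangle: otherwise one added edge makes it a clique. -/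
lemma Critical.false_of_two_adj (hG : Critical G) (h : Nbrs4 G v a b c d) (hab : G.Adj a b)
    (hac : G.Adj a c) (hbc : G.Adj b c) (hda : G.Adj d a) (hdb : G.Adj d b) : False := by
  obtain ⟨M, L, R, hS⟩ := hG.exists_forestSep_edge h d c
  refine hG.false_of_clique le_sup_left (fun x y hx hy hxy ↦ ?_) hS
  have h1 := (h.adj x).1 hx
  have h2 := (h.adj y).1 hy
  rw [sup_adj, edge_adj]
  have := hab.symm
  have := hac.symm
  have := hbc.symm
  have := hda.symm
  have := hdb.symm
  grind

/-! ### Adjacent vertices of degree four -/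

/-- Let `v`, `a` be removed from a supergraph `H` of `G`. If the result has a forest separation
whose cut does not contain all of `b`, `c`, `d` and whose side `L` contains none of them, then `v`
and `a` can be put back, with `a` going to the cut precisely when `x` lies in `L`. -/
lemma Critical.false_of_forestSep (hG : Critical G) {H : SimpleGraph V} (hle : G ≤ H) {x : V}
    (hv : Nbrs4 G v a b c d) (ha : Nbrs4 G a v b c x) (hdx : G.Adj d x) {M L R : Set V}
    (hnotM : ¬ (b ∈ M ∧ c ∈ M ∧ d ∈ M)) (hS : ForestSep H {v, a}ᶜ M L R)
    (hbL : b ∉ L) (hcL : c ∉ L) (hdL : d ∉ L) : False := by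
  have hva : G.Adj v a := (hv.adj a).2 (by simp)
  have hvd : G.Adj v d := (hv.adj d).2 (by simp)
  have hmemY : ∀ y, y ≠ v → y ≠ a → y ∈ M ∨ y ∈ L ∨ y ∈ R := fun y h1 h2 ↦
    (hS.mem y).1 (by simp [h1, h2])
  have hd := hmemY d hvd.ne' hv.ad.symm
  have hvY := hS.mem v
  have haY := hS.mem a
  simp only [Set.mem_compl_iff, Set.mem_insert_iff, Set.mem_singleton_iff, true_or, or_true,
    not_true_eq_false, false_iff, not_or] at hvY haY
  have hnvL : ∀ y ∈ L, ¬ G.Adj y v := by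
    intro y hy hyv
    rcases (hv.adj y).1 hyv.symm with rfl | rfl | rfl | rfl
    exacts [haY.2.1 hy, hbL hy, hcL hy, hdL hy]
  by_cases hxL : x ∈ L
  · -- `d` is adjacent to `x`, so `d` is in the cut and one of `b`, `c` is in `R`
    have hdR : d ∉ R := fun h ↦ hS.noadj x hxL d h (hle hdx.symm)
    have hbcM : ¬ (b ∈ M ∧ c ∈ M) := by
      have : d ∈ M := by tauto
      tauto
    refine hG.noSep (insert a M) L (insert v R) ⟨hS.left, ⟨v, by simp⟩, ?_, ?_, ?_, ?_, ?_, ?_⟩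
    · intro y
      have := hmemY y
      simp only [Set.mem_univ, Set.mem_insert_iff, true_iff]
      tauto
    · rintro y (rfl | hy)
      exacts [haY.2.1, hS.ml y hy]
    · rintro y (rfl | hy) (rfl | hy')
      · exact hva.ne rfl
      · exact haY.2.2 hy'
      · exact hvY.1 hy
      · exact hS.mr y hy hy'
    · rintro y hy (rfl | hy')
      exacts [hvY.2.1 hy, hS.lr y hy hy']
    · rintro y hy z (rfl | hz) hyz
      exacts [hnvL y hy hyz, hS.noadj y hy z hz (hle hyz)]
    · refine (hS.forest.anti hle).insert fun p hp q hq hap haq ↦ ?_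
      have h1 := (ha.adj p).1 hap
      have h2 := (ha.adj q).1 haq
      have h3 : x ∉ M := fun h ↦ hS.ml x h hxL
      have h4 := hvY.1
      clear hmemY hnvL haY hvY hS hd
      grind only
  · have hnaL : ∀ y ∈ L, ¬ G.Adj y a := by
      intro y hy hya
      rcases (ha.adj y).1 hya.symm with rfl | rfl | rfl | rfl
      exacts [hvY.2.1 hy, hbL hy, hcL hy, hxL hy]
    refine hG.noSep M L (insert v (insert a R)) ⟨hS.left, ⟨v, by simp⟩, ?_, hS.ml, ?_, ?_, ?_,
      hS.forest.anti hle⟩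
    · intro y
      have := hmemY y
      simp only [Set.mem_univ, Set.mem_insert_iff, true_iff]
      tauto
    · rintro y hy (rfl | rfl | hy')
      exacts [hvY.1 hy, haY.1 hy, hS.mr y hy hy']
    · rintro y hy (rfl | rfl | hy')
      exacts [hvY.2.1 hy, haY.2.1 hy, hS.lr y hy hy']
    · rintro y hy z (rfl | rfl | hz) hyz
      exacts [hnvL y hy hyz, hnaL y hy hyz, hS.noadj y hy z hz (hle hyz)]

/-- A configuration in which `{b, c, d, x}` may contain a cycle, so that it need not be a forest cut.
Instead `v`, `a` are removed and the edge `dc` is added, which makes `b`, `c`, `d` a triangle; a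
forest cut of the result neither contains nor separates these three vertices. -/
lemma Critical.false_of_adj_adj (hG : Critical G) {x : V} (hv : Nbrs4 G v a b c d)
    (ha : Nbrs4 G a v b c x) (hbc : G.Adj b c) (hdx : G.Adj d x)
    (hdb : G.Adj d b) : False := by
  classical
  have hV := hG.nine_le_card_of_vdeg hv.vdeg_eq
  have hle : G ≤ G ⊔ edge d c := le_sup_left
  have hva : G.Adj v a := (hv.adj a).2 (by simp)
  have hvb : G.Adj v b := (hv.adj b).2 (by simp)
  have hvc : G.Adj v c := (hv.adj c).2 (by simp)
  have hvd : G.Adj v d := (hv.adj d).2 (by simp)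
  have hab : G.Adj a b := (ha.adj b).2 (by simp)
  have hac : G.Adj a c := (ha.adj c).2 (by simp)
  have hax : G.Adj a x := (ha.adj x).2 (by simp)
  have hvx : v ≠ x := ha.ad
  have hXc : ({v, a} : Set V).ncard = 2 := Set.ncard_pair hva.ne
  have hXc' : 4 ≤ ({v, a} : Set V)ᶜ.ncard := by
    have := Set.ncard_add_ncard_compl ({v, a} : Set V)
    omega
  obtain ⟨M, L, R, hS⟩ : ∃ M L R, ForestSep (G ⊔ edge d c) {v, a}ᶜ M L R := by
    refine hG.red₁ d c {v, a}
      {s(v, a), s(v, b), s(v, c), s(v, d), s(a, b), s(a, c), s(a, x)} ⟨v, by simp⟩ hXc' ?_ ?_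
    · intro e he
      simp only [Finset.mem_insert, Finset.mem_singleton] at he
      rcases he with rfl | rfl | rfl | rfl | rfl | rfl | rfl
      · exact ⟨hva, v, by simp, by simp⟩
      · exact ⟨hvb, v, by simp, by simp⟩
      · exact ⟨hvc, v, by simp, by simp⟩
      · exact ⟨hvd, v, by simp, by simp⟩
      · exact ⟨hab, a, by simp, by simp⟩
      · exact ⟨hac, a, by simp, by simp⟩
      · exact ⟨hax, a, by simp, by simp⟩
    · have h1 := hv.ab
      have h2 := hv.ac
      have h3 := hv.ad
      have h4 := hv.bc
      have h5 := hv.bd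
      have h6 := hv.cd
      have h7 := ha.bd
      have h8 := ha.cd
      have h9 := hva.ne
      have h10 := hvb.ne
      have h11 := hvc.ne
      have h12 := hvd.ne
      have h13 := hax.ne
      rw [hXc, Finset.card_insert_of_notMem, Finset.card_insert_of_notMem,
        Finset.card_insert_of_notMem, Finset.card_insert_of_notMem, Finset.card_insert_of_notMem,
        Finset.card_insert_of_notMem, Finset.card_singleton]
      all_goals simp only [Finset.mem_insert, Finset.mem_singleton, Sym2.eq_iff, Nat.reduceAdd,
        Nat.reduceMul, Nat.reduceLeDiff]
      all_goals grind only
  have hcd : (G ⊔ edge d c).Adj c d := by simp [edge_adj, hv.cd, hv.cd.symm]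
  have hnotM : ¬ (b ∈ M ∧ c ∈ M ∧ d ∈ M) := fun ⟨h1, h2, h3⟩ ↦
    hS.forest.no_triangle h1 h2 h3 (hle hbc) (hle hdb.symm) hcd
  have hmemY : ∀ y, y ≠ v → y ≠ a → y ∈ M ∨ y ∈ L ∨ y ∈ R := fun y h1 h2 ↦
    (hS.mem y).1 (by simp [h1, h2])
  have hb := hmemY b hvb.ne' hab.ne'
  have hc := hmemY c hvc.ne' hac.ne'
  have hd := hmemY d hvd.ne' hv.ad.symm
  -- the sides may be exchanged, so that none of `b`, `c`, `d` lies in `L`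
  obtain ⟨L, R, hS, hbL, hcL, hdL⟩ : ∃ L R, ForestSep (G ⊔ edge d c) {v, a}ᶜ M L R ∧
      b ∉ L ∧ c ∉ L ∧ d ∉ L := by
    by_cases hL : b ∉ L ∧ c ∉ L ∧ d ∉ L
    · exact ⟨L, R, hS, hL⟩
    · refine ⟨R, L, hS.symm, ?_⟩
      have e1 := fun y hy z hz ↦ hS.noadj y hy z hz
      have := hle hbc
      have := hle hdb
      have := (hle hbc).symm
      have := (hle hdb).symm
      have := hcd.symm
      have := hS.lr
      grind
  exact hG.false_of_forestSep hle hv ha hdx hnotM hS hbL hcL hdL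

/-- If `N(v)` consists of a triangle `abc` and a vertex `d`, then `a` has degree other than four. -/
lemma Critical.false_of_triangle (hG : Critical G) (hv : Nbrs4 G v a b c d) (hab : G.Adj a b)
    (hac : G.Adj a c) (hbc : G.Adj b c) (hda : vdeg G a = 4) : False := by
  have hV := hG.nine_le_card_of_vdeg hda
  have hva : G.Adj v a := (hv.adj a).2 (by simp)
  have hvb : G.Adj v b := (hv.adj b).2 (by simp)
  have hvc : G.Adj v c := (hv.adj c).2 (by simp)
  have hvd : G.Adj v d := (hv.adj d).2 (by simp)
  obtain ⟨x, ha⟩ := exists_nbrs4 hda hva.symm hab hac hvb.ne hvc.ne hbc.ne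
  have hax : G.Adj a x := (ha.adj x).2 (by simp)
  have hdbc : ¬ (G.Adj d b ∧ G.Adj d c) := fun ⟨h1, h2⟩ ↦
    hG.false_of_two_adj hv.swap_ab.swap_bc hbc hab.symm hac.symm h1 h2
  have hxbc : ¬ (G.Adj x b ∧ G.Adj x c) := fun ⟨h1, h2⟩ ↦
    hG.false_of_two_adj ha.swap_ab.swap_bc hbc hvb.symm hvc.symm h1 h2
  -- `{b, c, d, x}` separates `{v, a}` from the rest, so it cannot induce a forest
  have hcut : ¬ InducesForest G {x, d, b, c} := by
    refine hG.not_inducesForest (A := {v, a}) ⟨v, by simp⟩ ?_ ?_ ?_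
    · have := hva.ne
      have := hvb.ne
      have := hvc.ne
      have := hvd.ne
      have := hax.ne
      have := hv.ab
      have := hv.ac
      have := hv.ad
      have := ha.ad
      simp only [Set.mem_insert_iff, Set.mem_singleton_iff]
      grind
    · rintro y (rfl | rfl) z hyz
      · have := (hv.adj z).1 hyz
        simp only [Set.mem_insert_iff, Set.mem_singleton_iff]
        tauto
      · have := (ha.adj z).1 hyz
        simp only [Set.mem_insert_iff, Set.mem_singleton_iff]
        tauto
    · obtain ⟨w, hw⟩ := exists_ne_six hV v a b c d x
      exact ⟨w, by simp [hw], by simp [hw]⟩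
  have hbcF : InducesForest G {b, c} := by
    rw [← insert_empty_eq c]
    refine (InducesForest.empty.insert ?_).insert ?_ <;> simp
  have hbcdF : InducesForest G {d, b, c} := by
    refine hbcF.insert ?_
    simp only [Set.mem_insert_iff, Set.mem_singleton_iff]
    grind
  by_cases hxd : x = d
  · exact hcut (by simpa [hxd] using hbcdF)
  by_cases hdx : G.Adj d x
  swap
  · refine hcut (hbcdF.insert ?_)
    simp only [Set.mem_insert_iff, Set.mem_singleton_iff]
    have := G.adj_comm d x
    grind
  by_cases hdb : G.Adj d b
  · exact hG.false_of_adj_adj hv ha hbc hdx hdb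
  by_cases hdc : G.Adj d c
  · exact hG.false_of_adj_adj hv.swap_bc ha.swap_bc hbc.symm hdx hdc
  -- now `d` is a leaf attached to `x`, which is attached to at most one of `b`, `c`
  refine hcut ?_
  rw [Set.insert_comm]
  refine (hbcF.insert ?_).insert ?_
  · simp only [Set.mem_insert_iff, Set.mem_singleton_iff]
    grind
  · simp only [Set.mem_insert_iff, Set.mem_singleton_iff]
    grind

/-- A vertex of degree four has at most one neighbour of degree four. -/
lemma Critical.eq_of_adj (hG : Critical G) (hv : vdeg G v = 4) {p q : V} (hp : G.Adj v p)
    (hq : G.Adj v q) (hp4 : vdeg G p = 4) (hq4 : vdeg G q = 4) : p = q := by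
  obtain ⟨a, b, c, d, h, hab, hac, hbc⟩ := hG.exists_triangle hv
  -- a neighbour of degree four cannot lie in the triangle `abc`, so it must be `d`
  have key : ∀ y, G.Adj v y → vdeg G y = 4 → y = d := by
    intro y hy hy4
    rcases (h.adj y).1 hy with rfl | rfl | rfl | rfl
    · exact (hG.false_of_triangle h hab hac hbc hy4).elim
    · exact (hG.false_of_triangle h.swap_ab hab.symm hbc hac hy4).elim
    · exact (hG.false_of_triangle h.swap_bc.swap_ab hac.symm hbc.symm hab hy4).elim
    · rfl
  exact (key p hp hp4).trans (key q hq hq4).symm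

end Critical

/-- in a minimal counterexample for forests (`2 < α ≤ 5/2`), the set `U`
of degree-4 vertices induces a graph of maximum degree at most 1. -/
theorem stmt15 (α β : ℝ) (hα1 : 2 < α) (hα2 : α ≤ 5 / 2) (hβ : 4 * α - β = 6)
    {V : Type} [Fintype V] (G : SimpleGraph V)
    (hG : MinCounterexample ForestClass α β G) :
    ∀ v : ↥{v : V | vdeg G v = 4},
      vdeg (G.induce {v : V | vdeg G v = 4}) v ≤ 1 := by
  have hC := critical_of_minCounterexample hα2 hβ hG
  intro v
  rw [vdeg, Set.ncard_le_one_iff]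
  intro p q hp hq
  exact Subtype.ext (hC.eq_of_adj v.2 (by simpa using hp) (by simpa using hq) p.2 q.2)
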